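/- Let G = (V,E) be a finite complete undirected graph with a self-loop at every vertex, c : E → ℝ≥0 a cost function satisfying the triangle inequality (including c(vv) ≤ 2·min_{u∈V} c(uv) for loops), and r : V → ℤ≥1. Let TR*_{c,r} denote a minimum-cost feasible Many-Visits tour for requirements r, TR*_{c,1} a minimum-cost tour for requirements 1, and TP*_{c,r-1} a minimum-cost vector z ∈ ℤ^E_{≥0} with d_z(v) = 2(r(v)−1) for all v (the transportation relaxation). Suppose T₁ ∈ ℤ^E_{≥0} is a feasible tour for requirements 1 with c(T₁) ≤ α·c(TR*_{c,1}) for some α ≥ 1. Then the feasible Many-Visits tour T = T₁ + TP*_{c,r-1} satisfies c(T) ≤ (α+1)·c(TR*_{c,r}). -/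

import Mathlib

/- The complete undirected graph with a self-loop at every vertex of the finite vertex
type `V` is modelled by taking the edge set `E` to be all of `Sym2 V`. -/

/-- `d_z(v)`: the sum of the `z`-values on the edges incident to `v`, with the self-loop
at `v` counted twice. -/
def degSum {V : Type*} [Fintype V] [DecidableEq V] (z : Sym2 V → ℤ) (v : V) : ℤ :=
  (∑ u : V, z s(v, u)) + z s(v, v)

/-- `supp(z)` is a connected subgraph spanning all of `V`. -/
def ConnSupp {V : Type*} [Fintype V] [DecidableEq V] (z : Sym2 V → ℤ) : Prop :=
  ∀ A : Finset V, A.Nonempty → A ≠ Finset.univ → ∃ u ∈ A, ∃ w, w ∉ A ∧ z s(u, w) ≠ 0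

/-- `z` is a feasible Many-Visits TSP tour for the requirements `r`. -/
def FeasibleTour {V : Type*} [Fintype V] [DecidableEq V] (z : Sym2 V → ℤ) (r : V → ℤ) :
    Prop :=
  (∀ e, 0 ≤ z e) ∧ (∀ v, degSum z v = 2 * r v) ∧ ConnSupp z

/-- `c(z) = ∑_e c(e) z(e)`: the cost of the multigraph represented by `z`. -/
def tourCost {V : Type*} [Fintype V] [DecidableEq V] (c : Sym2 V → ℝ) (z : Sym2 V → ℤ) :
    ℝ :=
  ∑ e : Sym2 V, c e * (z e : ℝ)

/-!
Let `z` be an optimal tour for `r`. Replacing two edges `vu`, `vw` of `z` by `uw` (*splitting off*)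
does not raise the cost, by the triangle inequality, and lowers the requirement at `v` by one.
Splitting off once at every vertex turns `z` into a transportation solution for `r - 1`, hence
`c(TP) ≤ c(z)`. If splitting off can also be done without disconnecting the support as long as the
requirement at `v` is at least two, then repeating it turns `z` into a tour for requirements `1`,
hence `c(T₁) ≤ α c(z)`.

For the latter, all cuts of a tour are even, so at least two. Splitting off `vu`, `vw` destroys only
cuts `A` of value two with `u, w ∈ A` and `v ∉ A`. If `A` is such a cut and `vx` is a third edge at
`v`, then `vu`, `vx` can be split off: a cut `B` of value two obstructing that would give
`5 ≤ cut (A ∩ B) + cut (A ∪ B) ≤ cut A + cut B = 4` by submodularity.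
-/

theorem add_single_one_le {ι : Type*} [DecidableEq ι] {f g : ι → ℤ} (hfg : f ≤ g) {i : ι}
    (hi : f i < g i) : f + Pi.single i 1 ≤ g := by
  intro j
  rcases eq_or_ne j i with rfl | hj
  · simpa using hi
  · simpa [hj] using hfg j

theorem pi_int_le_induction_down {ι : Type*} [Finite ι] [DecidableEq ι] {P : (ι → ℤ) → Prop}
    {a b : ι → ℤ} (hab : a ≤ b) (hb : P b)
    (step : ∀ s i, a ≤ s → P (s + Pi.single i 1) → P s) : P a := by
  have := Fintype.ofFinite ι
  suffices descend : ∀ s, Relation.ReflTransGen (· ⋖ ·) s b → a ≤ s → P s from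
    descend a (le_iff_reflTransGen_covBy.1 hab) le_rfl
  intro s hsb
  induction hsb using Relation.ReflTransGen.head_induction_on with
  | refl => exact fun _ => hb
  | @head s t hst _ ih =>
    intro has
    obtain ⟨i, x, hx, rfl⟩ := Pi.covBy_iff_exists_right_eq.1 hst
    have ht : Function.update s i x = s + Pi.single i 1 := by
      rw [← Order.covBy_iff_add_one_eq.1 hx]
      ext j
      rcases eq_or_ne j i with rfl | hj <;> simp [*]
    exact step s i has (ht ▸ ih (has.trans hst.le))

section SplitOff

variable {V : Type*} [DecidableEq V]

/-- Splitting off the edges `vu` and `vw` at `v`: one copy of each is replaced by the edge `uw`.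
For `u = w = v` this deletes one copy of the loop at `v`. -/
def splitOff (z : Sym2 V → ℤ) (v u w : V) : Sym2 V → ℤ :=
  z - (Pi.single s(v, u) 1 + Pi.single s(v, w) 1) + Pi.single s(u, w) 1

theorem splitOff_nonneg {z : Sym2 V → ℤ} {v u w : V}
    (h : Pi.single s(v, u) 1 + Pi.single s(v, w) 1 ≤ z) : 0 ≤ splitOff z v u w :=
  add_nonneg (sub_nonneg.2 h) (Pi.single_nonneg.2 zero_le_one)

theorem splitOff_loop_nonneg {z : Sym2 V → ℤ} (hz : 0 ≤ z) {v : V} (hv : 0 < z s(v, v)) :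
    0 ≤ splitOff z v v v := by
  have hle : Pi.single s(v, v) 1 ≤ z := by simpa using add_single_one_le hz hv
  rwa [splitOff, ← sub_sub, sub_add_cancel, sub_nonneg]

theorem sum_single_edge (v u : V) (A : Finset V) :
    ∑ x ∈ A, (Pi.single s(v, u) 1 : Sym2 V → ℤ) s(v, x) = if u ∈ A then 1 else 0 := by
  simp only [Pi.single_apply, Sym2.congr_right, Finset.sum_ite_eq']

variable [Fintype V]

theorem exists_add_single_edge_le {y z : Sym2 V → ℤ} (hyz : y ≤ z) {v : V}
    (hlt : ∑ x, y s(v, x) < ∑ x, z s(v, x)) : ∃ x, y + Pi.single s(v, x) 1 ≤ z := by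
  obtain ⟨x, -, hx⟩ := Finset.exists_lt_of_sum_lt hlt
  exact ⟨x, add_single_one_le hyz hx⟩

theorem exists_single_edge_add_single_edge_le {z : Sym2 V → ℤ} (hz : 0 ≤ z) {v : V}
    (hv : 2 ≤ ∑ x, z s(v, x)) : ∃ u w, Pi.single s(v, u) 1 + Pi.single s(v, w) 1 ≤ z := by
  obtain ⟨u, hu⟩ := exists_add_single_edge_le hz (v := v)
    (by simp only [Pi.zero_apply, Finset.sum_const_zero]; omega)
  rw [zero_add] at hu
  obtain ⟨w, huw⟩ := exists_add_single_edge_le hu (v := v)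
    (by rw [sum_single_edge, if_pos (Finset.mem_univ u)]; omega)
  exact ⟨u, w, huw⟩

end SplitOff

section Tour

variable {V : Type*} [Fintype V] [DecidableEq V]

theorem degSum_add (y z : Sym2 V → ℤ) (v : V) : degSum (y + z) v = degSum y v + degSum z v := by
  simp only [degSum, Pi.add_apply, Finset.sum_add_distrib]
  ring

theorem degSum_sub (y z : Sym2 V → ℤ) (v : V) : degSum (y - z) v = degSum y v - degSum z v := by
  simp only [degSum, Pi.sub_apply, Finset.sum_sub_distrib]
  ring

theorem degSum_single (a b v : V) :
    degSum (Pi.single s(a, b) 1) v = (Pi.single a 1 + Pi.single b 1 : V → ℤ) v := by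
  rcases eq_or_ne v a with rfl | ha
  · rw [degSum, sum_single_edge]
    simp [Pi.single_apply]
  rcases eq_or_ne v b with rfl | hb
  · rw [degSum, Sym2.eq_swap (a := a), sum_single_edge]
    simp [ha]
  · simp [degSum, ha, hb]

theorem degSum_splitOff (z : Sym2 V → ℤ) (v u w t : V) :
    degSum (splitOff z v u w) t = degSum z t - 2 * (Pi.single v 1 : V → ℤ) t := by
  simp only [splitOff, degSum_add, degSum_sub, degSum_single, Pi.add_apply]
  ring

/-- `z` is feasible for the transportation problem with prescriptions `s`, that is, a tour for `s`
without the connectivity requirement. -/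
def IsTransport (z : Sym2 V → ℤ) (s : V → ℤ) : Prop :=
  0 ≤ z ∧ ∀ v, degSum z v = 2 * s v

theorem FeasibleTour.isTransport {z : Sym2 V → ℤ} {r : V → ℤ} (hz : FeasibleTour z r) :
    IsTransport z r :=
  ⟨hz.1, hz.2.1⟩

theorem IsTransport.splitOff_of_nonneg {z : Sym2 V → ℤ} {s : V → ℤ} {v u w : V}
    (hz : IsTransport z (s + Pi.single v 1)) (h : 0 ≤ splitOff z v u w) :
    IsTransport (splitOff z v u w) s := by
  refine ⟨h, fun t => ?_⟩
  rw [degSum_splitOff, hz.2, Pi.add_apply]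
  ring

theorem exists_splitOff_nonneg {z : Sym2 V → ℤ} (hz : 0 ≤ z) {v : V} (hv : 2 ≤ degSum z v) :
    ∃ u w, 0 ≤ splitOff z v u w := by
  by_cases hloop : 0 < z s(v, v)
  · exact ⟨v, v, splitOff_loop_nonneg hz hloop⟩
  · obtain ⟨u, w, huw⟩ := exists_single_edge_add_single_edge_le hz (v := v)
      (by unfold degSum at hv; omega)
    exact ⟨u, w, splitOff_nonneg huw⟩

theorem tourCost_add (c : Sym2 V → ℝ) (y z : Sym2 V → ℤ) :
    tourCost c (y + z) = tourCost c y + tourCost c z := by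
  simp [tourCost, mul_add, Finset.sum_add_distrib]

theorem tourCost_sub (c : Sym2 V → ℝ) (y z : Sym2 V → ℤ) :
    tourCost c (y - z) = tourCost c y - tourCost c z := by
  simp [tourCost, mul_sub, Finset.sum_sub_distrib]

theorem tourCost_single (c : Sym2 V → ℝ) (e : Sym2 V) : tourCost c (Pi.single e 1) = c e := by
  simp [tourCost, Pi.single_apply]

theorem tourCost_splitOff_le {c : Sym2 V → ℝ}
    (htri : ∀ u v w : V, c s(u, w) ≤ c s(u, v) + c s(v, w)) (z : Sym2 V → ℤ) (v u w : V) :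
    tourCost c (splitOff z v u w) ≤ tourCost c z := by
  have hshort : c s(u, w) ≤ c s(v, u) + c s(v, w) := Sym2.eq_swap (a := u) (b := v) ▸ htri u v w
  simp only [splitOff, tourCost_add, tourCost_sub, tourCost_single]
  linarith

/-- The value of the cut `A`: the number of edges of the multigraph `z` with exactly one end in
`A`. -/
def cutValue (z : Sym2 V → ℤ) (A : Finset V) : ℤ :=
  ∑ u ∈ A, ∑ w ∈ Aᶜ, z s(u, w)

theorem cutValue_eq_sum_ite (z : Sym2 V → ℤ) (A : Finset V) :
    cutValue z A = ∑ u, ∑ w, if u ∈ A ∧ w ∉ A then z s(u, w) else 0 := by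
  simp [cutValue, ite_and, Finset.sum_ite, Finset.compl_eq_univ_sdiff,
    Finset.filter_notMem_eq_sdiff]

theorem cutValue_add (y z : Sym2 V → ℤ) (A : Finset V) :
    cutValue (y + z) A = cutValue y A + cutValue z A := by
  simp only [cutValue, Pi.add_apply, Finset.sum_add_distrib]

theorem cutValue_sub (y z : Sym2 V → ℤ) (A : Finset V) :
    cutValue (y - z) A = cutValue y A - cutValue z A := by
  simp only [cutValue, Pi.sub_apply, Finset.sum_sub_distrib]

theorem cutValue_mono {y z : Sym2 V → ℤ} (hyz : y ≤ z) (A : Finset V) :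
    cutValue y A ≤ cutValue z A :=
  Finset.sum_le_sum fun _ _ => Finset.sum_le_sum fun _ _ => hyz _

theorem cutValue_compl (z : Sym2 V → ℤ) (A : Finset V) : cutValue z Aᶜ = cutValue z A := by
  rw [cutValue, compl_compl, Finset.sum_comm]
  simp only [cutValue, Sym2.eq_swap]

theorem cutValue_single (a b : V) (A : Finset V) :
    cutValue (Pi.single s(a, b) 1) A = if a ∈ A ↔ b ∈ A then 0 else 1 := by
  have hrow : ∀ u ∈ A, ∑ w ∈ Aᶜ, (Pi.single s(a, b) 1 : Sym2 V → ℤ) s(u, w) =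
      (if u = a then if b ∈ A then 0 else 1 else 0) +
        if u = b then if a ∈ A then 0 else 1 else 0 := by
    intro u hu
    rcases eq_or_ne u a with rfl | hua
    · simp [sum_single_edge, hu]
    rcases eq_or_ne u b with rfl | hub
    · rw [Sym2.eq_swap (a := a), sum_single_edge]
      simp [hua]
    · simp [hua, hub]
  rw [cutValue, Finset.sum_congr rfl hrow, Finset.sum_add_distrib, Finset.sum_ite_eq',
    Finset.sum_ite_eq']
  grind

theorem cutValue_splitOff (z : Sym2 V → ℤ) {v : V} {A : Finset V} (hv : v ∉ A) (u w : V) :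
    cutValue (splitOff z v u w) A = cutValue z A - if u ∈ A ∧ w ∈ A then 2 else 0 := by
  simp only [splitOff, cutValue_add, cutValue_sub, cutValue_single]
  grind

theorem cutValue_pos_iff {z : Sym2 V → ℤ} (hz : 0 ≤ z) (A : Finset V) :
    0 < cutValue z A ↔ ∃ u ∈ A, ∃ w, w ∉ A ∧ z s(u, w) ≠ 0 := by
  have hpos (e : Sym2 V) : 0 < z e ↔ z e ≠ 0 := (hz e).lt_iff_ne'
  have hnn (u : V) : ∀ w ∈ Aᶜ, 0 ≤ z s(u, w) := fun w _ => hz _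
  simp only [cutValue, Finset.sum_pos_iff_of_nonneg fun u _ => Finset.sum_nonneg (hnn u),
    Finset.sum_pos_iff_of_nonneg (hnn _), Finset.mem_compl, hpos]

theorem cutValue_inter_add_cutValue_union_le {z : Sym2 V → ℤ} (hz : 0 ≤ z) (A B : Finset V) :
    cutValue z (A ∩ B) + cutValue z (A ∪ B) ≤ cutValue z A + cutValue z B := by
  simp only [cutValue_eq_sum_ite, ← Finset.sum_add_distrib]
  refine Finset.sum_le_sum fun u _ => Finset.sum_le_sum fun w _ => ?_
  have huw : 0 ≤ z s(u, w) := hz s(u, w)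
  grind

theorem cutValue_insert (z : Sym2 V → ℤ) {a : V} {A : Finset V} (ha : a ∉ A) :
    cutValue z (insert a A) =
      cutValue z A + degSum z a - 2 * (z s(a, a) + ∑ u ∈ A, z s(a, u)) := by
  have hcompl : Aᶜ = insert a (insert a A)ᶜ := by
    rw [Finset.compl_insert, Finset.insert_erase (Finset.mem_compl.2 ha)]
  have hdeg : degSum z a =
      z s(a, a) + ∑ u ∈ A, z s(a, u) + ∑ w ∈ (insert a A)ᶜ, z s(a, w) + z s(a, a) := by
    rw [degSum, ← Finset.sum_add_sum_compl (insert a A), Finset.sum_insert ha]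
  have hcut : cutValue z A =
      ∑ u ∈ A, z s(a, u) + ∑ u ∈ A, ∑ w ∈ (insert a A)ᶜ, z s(u, w) := by
    simp only [cutValue, hcompl, Finset.sum_insert (by simp : a ∉ (insert a A)ᶜ),
      Finset.sum_add_distrib, Sym2.eq_swap (b := a)]
  rw [cutValue, Finset.sum_insert ha, hdeg, hcut]
  ring

theorem even_cutValue {z : Sym2 V → ℤ} (hdeg : ∀ v, Even (degSum z v)) (A : Finset V) :
    Even (cutValue z A) := by
  induction A using Finset.induction_on with
  | empty => simp [cutValue]
  | insert a A ha ih =>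
    rw [cutValue_insert z ha]
    exact (ih.add (hdeg a)).sub (even_two_mul _)

theorem ConnSupp.mono {y z : Sym2 V → ℤ} (hconn : ConnSupp y) (hy : 0 ≤ y) (hyz : y ≤ z) :
    ConnSupp z := by
  intro A hA hAuniv
  obtain ⟨u, hu, w, hw, huw⟩ := hconn A hA hAuniv
  exact ⟨u, hu, w, hw, (((hy _).lt_of_ne' huw).trans_le (hyz _)).ne'⟩

theorem connSupp_iff_forall_notMem {z : Sym2 V → ℤ} (hz : 0 ≤ z) (v : V) :
    ConnSupp z ↔ ∀ A : Finset V, A.Nonempty → v ∉ A → 0 < cutValue z A := by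
  simp only [ConnSupp, ← cutValue_pos_iff hz]
  refine ⟨fun h A hA hv => h A hA (by rintro rfl; simp at hv), fun h A hA hAuniv => ?_⟩
  by_cases hv : v ∈ A
  · rw [← cutValue_compl]
    exact h Aᶜ (by simpa [Finset.nonempty_iff_ne_empty] using hAuniv) (by simpa using hv)
  · exact h A hA hv

theorem FeasibleTour.two_le_cutValue {z : Sym2 V → ℤ} {r : V → ℤ} (hz : FeasibleTour z r)
    {A : Finset V} (hA : A.Nonempty) {v : V} (hv : v ∉ A) : 2 ≤ cutValue z A := by
  have hpos : 0 < cutValue z A := (connSupp_iff_forall_notMem hz.1 v).1 hz.2.2 A hA hv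
  have heven : Even (cutValue z A) := even_cutValue (fun t => hz.2.1 t ▸ even_two_mul (r t)) A
  exact Int.le_of_dvd hpos heven.two_dvd

theorem FeasibleTour.add_isTransport {y z : Sym2 V → ℤ} {r s : V → ℤ} (hy : FeasibleTour y r)
    (hz : IsTransport z s) : FeasibleTour (y + z) (r + s) := by
  refine ⟨add_nonneg hy.1 hz.1, fun v => ?_, hy.2.2.mono hy.1 (le_add_of_nonneg_right hz.1)⟩
  rw [degSum_add, hy.2.1, hz.2, Pi.add_apply, mul_add]

theorem exists_pair_forall_two_lt_cutValue {z : Sym2 V → ℤ} (hz : 0 ≤ z) {v : V}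
    (hcut : ∀ A : Finset V, A.Nonempty → v ∉ A → 2 ≤ cutValue z A)
    (hv : 3 ≤ ∑ x, z s(v, x)) :
    ∃ u w, Pi.single s(v, u) 1 + Pi.single s(v, w) 1 ≤ z ∧
      ∀ A : Finset V, v ∉ A → u ∈ A → w ∈ A → 2 < cutValue z A := by
  obtain ⟨u, w, huw⟩ := exists_single_edge_add_single_edge_le hz (v := v) (by omega)
  obtain ⟨x, huwx⟩ := exists_add_single_edge_le huw (v := v)
    (by simp only [Pi.add_apply, Finset.sum_add_distrib, sum_single_edge, Finset.mem_univ]; omega)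
  by_cases hgood : ∀ A : Finset V, v ∉ A → u ∈ A → w ∈ A → 2 < cutValue z A
  · exact ⟨u, w, huw, hgood⟩
  push Not at hgood
  obtain ⟨A, hvA, huA, hwA, hA⟩ := hgood
  have hux : Pi.single s(v, u) 1 + Pi.single s(v, x) 1 ≤ z := by
    refine le_trans ?_ huwx
    gcongr
    exact le_add_of_nonneg_right (Pi.single_nonneg.2 zero_le_one)
  refine ⟨u, x, hux, fun B hvB huB hxB => ?_⟩
  have hinter : 2 ≤ cutValue z (A ∩ B) := hcut _ ⟨u, by simp [huA, huB]⟩ (by simp [hvA])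
  have hunion : 3 ≤ cutValue z (A ∪ B) := by
    refine le_of_eq_of_le ?_ (cutValue_mono huwx (A ∪ B))
    simp [cutValue_add, cutValue_single, hvA, hvB, huA, hwA, hxB]
  have hsubmod := cutValue_inter_add_cutValue_union_le hz A B
  omega

theorem FeasibleTour.exists_splitOff {z : Sym2 V → ℤ} {s : V → ℤ} {v : V}
    (hz : FeasibleTour z (s + Pi.single v 1)) (hv : 1 ≤ s v) :
    ∃ u w, FeasibleTour (splitOff z v u w) s := by
  suffices hsplit : ∃ u w, 0 ≤ splitOff z v u w ∧
      ∀ A : Finset V, v ∉ A → u ∈ A → w ∈ A → 2 < cutValue z A by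
    obtain ⟨u, w, hnn, hcut⟩ := hsplit
    refine ⟨u, w, hnn, (hz.isTransport.splitOff_of_nonneg hnn).2,
      (connSupp_iff_forall_notMem hnn v).2 fun A hA hvA => ?_⟩
    have htwo := hz.two_le_cutValue hA hvA
    rw [cutValue_splitOff z hvA]
    grind
  by_cases hloop : 0 < z s(v, v)
  · exact ⟨v, v, splitOff_loop_nonneg hz.1 hloop, fun A hvA hvA' => absurd hvA' hvA⟩
  · have hdeg := hz.2.1 v
    simp only [degSum, Pi.add_apply, Pi.single_eq_same] at hdeg
    obtain ⟨u, w, huw, hcut⟩ := exists_pair_forall_two_lt_cutValue hz.1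
      (fun A hA hvA => hz.two_le_cutValue hA hvA) (v := v) (by omega)
    exact ⟨u, w, splitOff_nonneg huw, hcut⟩

variable {c : Sym2 V → ℝ} {z : Sym2 V → ℤ} {r s : V → ℤ}

theorem IsTransport.exists_tourCost_le (htri : ∀ u v w : V, c s(u, w) ≤ c s(u, v) + c s(v, w))
    (hz : IsTransport z r) (hs : 0 ≤ s) (hsr : s ≤ r) :
    ∃ y, IsTransport y s ∧ tourCost c y ≤ tourCost c z := by
  refine pi_int_le_induction_down
    (P := fun t => ∃ y, IsTransport y t ∧ tourCost c y ≤ tourCost c z) hsr ⟨z, hz, le_rfl⟩ ?_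
  rintro t v hst ⟨y, hy, hyz⟩
  have hdeg : 2 ≤ degSum y v := by
    have htv : 0 ≤ t v := (hs v).trans (hst v)
    rw [hy.2, Pi.add_apply, Pi.single_eq_same]
    omega
  obtain ⟨u, w, hnn⟩ := exists_splitOff_nonneg hy.1 hdeg
  exact ⟨splitOff y v u w, hy.splitOff_of_nonneg hnn, (tourCost_splitOff_le htri y v u w).trans hyz⟩

theorem FeasibleTour.exists_tourCost_le (htri : ∀ u v w : V, c s(u, w) ≤ c s(u, v) + c s(v, w))
    (hz : FeasibleTour z r) (hs : 1 ≤ s) (hsr : s ≤ r) :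
    ∃ y, FeasibleTour y s ∧ tourCost c y ≤ tourCost c z := by
  refine pi_int_le_induction_down
    (P := fun t => ∃ y, FeasibleTour y t ∧ tourCost c y ≤ tourCost c z) hsr ⟨z, hz, le_rfl⟩ ?_
  rintro t v hst ⟨y, hy, hyz⟩
  obtain ⟨u, w, hsplit⟩ := hy.exists_splitOff ((hs v).trans (hst v))
  exact ⟨splitOff y v u w, hsplit, (tourCost_splitOff_le htri y v u w).trans hyz⟩

end Tour

/-- Cost guarantee of Theorem 5 (the simple `(α+1)`-approximation): if `Topt` is an optimal
Many-Visits tour for `r`, `Topt1` an optimal tour for requirements `1`, `TP` an optimal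
solution of the transportation relaxation with prescriptions `r - 1`, and `T₁` is a feasible
tour for requirements `1` of cost at most `α` times that of `Topt1`, then the feasible
Many-Visits tour `T₁ + TP` has cost at most `(α + 1)` times that of `Topt`. -/
theorem simple_approximation_cost
    {V : Type*} [Fintype V] [DecidableEq V]
    (c : Sym2 V → ℝ) (hc0 : ∀ e, 0 ≤ c e)
    (htri : ∀ u v w : V, c s(u, w) ≤ c s(u, v) + c s(v, w))
    (r : V → ℤ) (hr : ∀ v, 1 ≤ r v)
    (Topt : Sym2 V → ℤ) (hTopt : FeasibleTour Topt r)
    (hToptMin : ∀ z, FeasibleTour z r → tourCost c Topt ≤ tourCost c z)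
    (Topt1 : Sym2 V → ℤ) (hTopt1 : FeasibleTour Topt1 (fun _ => 1))
    (hTopt1Min : ∀ z, FeasibleTour z (fun _ => 1) → tourCost c Topt1 ≤ tourCost c z)
    (TP : Sym2 V → ℤ) (hTPnn : ∀ e, 0 ≤ TP e)
    (hTPdeg : ∀ v, degSum TP v = 2 * (r v - 1))
    (hTPmin : ∀ z : Sym2 V → ℤ, (∀ e, 0 ≤ z e) → (∀ v, degSum z v = 2 * (r v - 1)) →
      tourCost c TP ≤ tourCost c z)
    (α : ℝ) (hα : 1 ≤ α)
    (T₁ : Sym2 V → ℤ) (hT₁ : FeasibleTour T₁ (fun _ => 1))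
    (hT₁cost : tourCost c T₁ ≤ α * tourCost c Topt1) :
    FeasibleTour (fun e => T₁ e + TP e) r ∧
    tourCost c (fun e => T₁ e + TP e) ≤ (α + 1) * tourCost c Topt := by
  have hTP : IsTransport TP (r - 1) := ⟨hTPnn, hTPdeg⟩
  refine ⟨add_sub_cancel 1 r ▸ hT₁.add_isTransport hTP, ?_⟩
  obtain ⟨y, hy, hy_le⟩ := hTopt.isTransport.exists_tourCost_le htri (s := r - 1)
    (sub_nonneg.2 hr) (sub_le_self r zero_le_one)
  obtain ⟨x, hx, hx_le⟩ := hTopt.exists_tourCost_le htri (s := 1) le_rfl hr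
  have hTP_le : tourCost c TP ≤ tourCost c Topt := (hTPmin y hy.1 hy.2).trans hy_le
  have hTopt1_le : tourCost c Topt1 ≤ tourCost c Topt := (hTopt1Min x hx).trans hx_le
  calc tourCost c (T₁ + TP) = tourCost c T₁ + tourCost c TP := tourCost_add c T₁ TP
    _ ≤ α * tourCost c Topt1 + tourCost c TP := by gcongr
    _ ≤ α * tourCost c Topt + tourCost c Topt := by gcongr
    _ = (α + 1) * tourCost c Topt := by ring
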